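/- Let (pc_n)_{n∈ℕ} and (t_n)_{n∈ℕ} be arbitrary sequences of physical clock readings in ℕ and incoming timestamps in ℕ × ℕ, let h_0 ∈ ℕ × ℕ be arbitrary, and define h_{n+1} = updateHLC(h_n, pc_n, t_n) for all n. Then the sequence (h_n) is strictly increasing in the lexicographic order on ℕ × ℕ: for all m < n, h_m <_lex h_n. (This is the happens-before capturing property of hybrid logical clocks along any chain of events at a server: regardless of the behavior of the physical clock, successive HLC values strictly increase, so events ordered by the clock updates receive strictly increasing timestamps.) -/

import Mathlib

/-! A single update strictly increases the clock: the new first component is a maximum that includes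
the old one, and when the two agree, the new counter exceeds the old one. The chain statement then
follows from transitivity of the lexicographic order. -/

/-- Hybrid logical clock update: given current clock `h = (l', c')`, physical
clock reading `pc`, and incoming timestamp `t = (tl, tc)`, return `(l, c)`
where `l = max (l', pc, tl)` and `c` is as in the HLC algorithm. -/
def updateHLC (h : ℕ × ℕ) (pc : ℕ) (t : ℕ × ℕ) : ℕ × ℕ :=
  let l := max (max h.1 pc) t.1
  let c :=
    if l = h.1 ∧ l = t.1 then max h.2 t.2 + 1
    else if l = h.1 then h.2 + 1
    else if l = t.1 then t.2 + 1
    else 0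
  (l, c)

theorem lex_updateHLC (h : ℕ × ℕ) (pc : ℕ) (t : ℕ × ℕ) :
    Prod.Lex (· < ·) (· < ·) h (updateHLC h pc t) := by
  rw [Prod.lex_def]
  simp only [updateHLC]
  split_ifs <;> omega

/-- Along any chain of HLC updates—regardless of the physical clock readings
and incoming timestamps—the sequence of clock values is strictly increasing
in the lexicographic order on `ℕ × ℕ`. -/
theorem updateHLC_chain_strictMono (pc : ℕ → ℕ) (t : ℕ → ℕ × ℕ)
    (h : ℕ → ℕ × ℕ) (hstep : ∀ n, h (n + 1) = updateHLC (h n) (pc n) (t n)) :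
    ∀ m n, m < n → Prod.Lex (· < ·) (· < ·) (h m) (h n) := by
  intro m n hmn
  induction n, hmn using Nat.le_induction with
  | base => exact hstep m ▸ lex_updateHLC _ _ _
  | succ k _ ih => exact _root_.trans ih (hstep k ▸ lex_updateHLC _ _ _)
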